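/- Let J and L be real symmetric positive definite 3×3 matrices and let k₁ > 0, k₂ > 0, α > 0, λ > 0 be real numbers. Then the 10×10 real block matrix A = [[0, (1/2)I₃, 0, 0], [−k₁ J⁻¹ L, 0, −(1/2) k₂ α λ J⁻¹ L, 0], [0, (1/2)I₃, −α λ I₃, 0], [0, 0, 0, −α λ]] (where the first three diagonal blocks are 3×3 and the last is 1×1) is Hurwitz, i.e., every eigenvalue of A has strictly negative real part. -/

import Mathlib

open Matrix

lemma aux_quad (J : Matrix (Fin 3) (Fin 3) ℝ) (hJ : J.PosDef) (x : Fin 3 → ℂ) (hx : x ≠ 0) :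
    ∃ p : ℝ, 0 < p ∧ star x ⬝ᵥ ((J.map (algebraMap ℝ ℂ)) *ᵥ x) = (p : ℂ) := by
  have hs : ∀ i j, J i j = J j i := fun i j => by
    have := hJ.1.apply i j
    simpa using this.symm
  set y : Fin 3 → ℝ := fun i => (x i).re with hy
  set z : Fin 3 → ℝ := fun i => (x i).im with hz
  refine ⟨y ⬝ᵥ (J *ᵥ y) + z ⬝ᵥ (J *ᵥ z), ?_, ?_⟩
  · have hyn : 0 ≤ y ⬝ᵥ (J *ᵥ y) := by
      simpa using hJ.posSemidef.dotProduct_mulVec_nonneg y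
    have hzn : 0 ≤ z ⬝ᵥ (J *ᵥ z) := by
      simpa using hJ.posSemidef.dotProduct_mulVec_nonneg z
    by_cases h0 : y = 0
    · have h1 : z ≠ 0 := by
        intro h1
        apply hx
        funext i
        exact Complex.ext (congrFun h0 i) (congrFun h1 i)
      have : 0 < z ⬝ᵥ (J *ᵥ z) := by simpa using hJ.dotProduct_mulVec_pos h1
      linarith
    · have : 0 < y ⬝ᵥ (J *ᵥ y) := by simpa using hJ.dotProduct_mulVec_pos h0
      linarith
  · apply Complex.ext
    · simp [dotProduct, mulVec, Fin.sum_univ_three, hy, hz]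
      ring
    · simp [dotProduct, mulVec, Fin.sum_univ_three, hy, hz]
      rw [hs 1 0, hs 2 0, hs 2 1]
      ring

lemma aux_cubic (p q k₁ c a : ℝ) (hp : 0 < p) (hq : 0 < q) (hk : 0 < k₁) (hc : 0 < c) (ha : 0 < a)
    (μ : ℂ) (h : 2 * μ ^ 2 * (μ + a) * p + (k₁ * (μ + a) + c * μ) * q = 0) : μ.re < 0 := by
  by_contra! hu
  obtain ⟨u, v⟩ := μ
  have hr := congrArg Complex.re h
  have hi := congrArg Complex.im h
  simp [pow_two] at hr hi hu
  have hi' : v * (6*p*u^2 - 2*p*v^2 + 4*p*a*u + q*(k₁+c)) = 0 := by linarith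
  rcases mul_eq_zero.1 hi' with h0 | h0
  · subst h0
    have : 0 < 2*p*u^3 + 2*p*a*u^2 + q*(k₁+c)*u + q*k₁*a := by positivity
    linarith
  · have : 0 < 16*p*u^3 + 16*p*a*u^2 + 4*p*a^2*u + 2*q*(k₁+c)*u + a*q*c := by positivity
    have e : 16*p*u^3 + 16*p*a*u^2 + 4*p*a^2*u + 2*q*(k₁+c)*u + a*q*c = 0 := by
      linear_combination (3*u+a) * h0 - hr
    linarith

/-- Let `J` and `L` be real symmetric positive definite 3×3 matrices and
`k₁, k₂, α, λ > 0`. Then the 10×10 block matrix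
`A = [[0, (1/2)I₃, 0, 0], [−k₁ J⁻¹L, 0, −(1/2)k₂αλ J⁻¹L, 0], [0, (1/2)I₃, −αλI₃, 0],
[0, 0, 0, −αλ]]` (first three diagonal blocks 3×3, last 1×1) is Hurwitz. -/
theorem limit_output_feedback_matrix_hurwitz
    (J L : Matrix (Fin 3) (Fin 3) ℝ) (hJ : J.PosDef) (hL : L.PosDef)
    (k₁ k₂ α lam : ℝ) (hk₁ : 0 < k₁) (hk₂ : 0 < k₂) (hα : 0 < α) (hlam : 0 < lam) :
    ∀ μ ∈ spectrum ℂ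
      ((Matrix.fromBlocks
        (Matrix.fromBlocks
          (0 : Matrix (Fin 3) (Fin 3) ℝ) ((1/2 : ℝ) • (1 : Matrix (Fin 3) (Fin 3) ℝ))
          (-(k₁ • (J⁻¹ * L))) (0 : Matrix (Fin 3) (Fin 3) ℝ))
        (Matrix.fromBlocks
          (0 : Matrix (Fin 3) (Fin 3) ℝ) (0 : Matrix (Fin 3) (Fin 1) ℝ)
          (-(((1/2) * k₂ * α * lam) • (J⁻¹ * L))) (0 : Matrix (Fin 3) (Fin 1) ℝ))
        (Matrix.fromBlocks
          (0 : Matrix (Fin 3) (Fin 3) ℝ) ((1/2 : ℝ) • (1 : Matrix (Fin 3) (Fin 3) ℝ))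
          (0 : Matrix (Fin 1) (Fin 3) ℝ) (0 : Matrix (Fin 1) (Fin 3) ℝ))
        (Matrix.fromBlocks
          (-((α * lam) • (1 : Matrix (Fin 3) (Fin 3) ℝ))) (0 : Matrix (Fin 3) (Fin 1) ℝ)
          (0 : Matrix (Fin 1) (Fin 3) ℝ) (-((α * lam) • (1 : Matrix (Fin 1) (Fin 1) ℝ))))).map
        (algebraMap ℝ ℂ)),
      μ.re < 0 := by
  intro μ hμ
  have ha : 0 < α * lam := mul_pos hα hlam
  rw [← Matrix.spectrum_toLin', ← Module.End.hasEigenvalue_iff_mem_spectrum] at hμ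
  obtain ⟨v, hv⟩ := hμ.exists_hasEigenvector
  have hne := hv.2
  have he := hv.apply_eq_smul
  rw [Matrix.toLin'_apply] at he
  by_cases hma : μ = -((α * lam : ℝ) : ℂ)
  · rw [hma]
    simpa using ha
  have hma' : μ + ((α * lam : ℝ) : ℂ) ≠ 0 := fun h => hma (eq_neg_of_add_eq_zero_left h)
  set x : Fin 3 → ℂ := fun i => v (Sum.inl (Sum.inl i)) with hx
  set w : Fin 3 → ℂ := fun i => v (Sum.inl (Sum.inr i)) with hw
  set z : Fin 3 → ℂ := fun i => v (Sum.inr (Sum.inl i)) with hz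
  set s : Fin 1 → ℂ := fun i => v (Sum.inr (Sum.inr i)) with hs
  have hvv : v = Sum.elim (Sum.elim x w) (Sum.elim z s) := by
    funext i
    rcases i with (i | i) | (i | i) <;> rfl
  rw [hvv] at he
  simp only [Matrix.fromBlocks_map, Matrix.fromBlocks_mulVec] at he
  have e1 : ∀ i, w i = 2 * μ * x i := fun i => by
    have := congrFun he (Sum.inl (Sum.inl i))
    fin_cases i <;> simp [mulVec, dotProduct, Fin.sum_univ_three, Matrix.one_apply] at this ⊢ <;>
      linear_combination 2 * this
  have e3 : ∀ i, (μ + ((α * lam : ℝ) : ℂ)) * z i = μ * x i := fun i => by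
    have := congrFun he (Sum.inr (Sum.inl i))
    have h1 := e1 i
    fin_cases i <;> simp [mulVec, dotProduct, Fin.sum_univ_three, Matrix.one_apply] at this h1 ⊢ <;>
      linear_combination -this + h1 / 2
  have e4 : ∀ i, (μ + ((α * lam : ℝ) : ℂ)) * s i = 0 := fun i => by
    have := congrFun he (Sum.inr (Sum.inr i))
    fin_cases i
    simp [mulVec, dotProduct, Fin.sum_univ_three, Matrix.one_apply] at this
    simp only [Fin.zero_eta, Complex.ofReal_mul]
    linear_combination -this
  have hx0 : x ≠ 0 := by
    intro h0
    apply hne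
    rw [hvv]
    have h0' : ∀ i, x i = 0 := fun i => congrFun h0 i
    funext i
    rcases i with (i | i) | (i | i)
    · exact h0' i
    · simpa [h0'] using e1 i
    · exact (mul_eq_zero.1 ((e3 i).trans (by rw [h0' i, mul_zero]))).resolve_left hma'
    · exact (mul_eq_zero.1 (e4 i)).resolve_left hma'
  set JC := J.map (algebraMap ℝ ℂ) with hJC
  set LC := L.map (algebraMap ℝ ℂ) with hLC
  set c : ℝ := (1/2) * k₂ * α * lam with hc
  have e2 : μ • w = -((k₁ : ℂ) • ((J⁻¹.map (algebraMap ℝ ℂ) * LC) *ᵥ x))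
      - (c : ℂ) • ((J⁻¹.map (algebraMap ℝ ℂ) * LC) *ᵥ z) := by
    rw [hLC, ← Matrix.map_mul]
    funext i
    have := congrFun he (Sum.inl (Sum.inr i))
    generalize J⁻¹ * L = K at this ⊢
    simp [mulVec, dotProduct, Fin.sum_univ_three] at this ⊢
    linear_combination -this
  have hJJ : JC * J⁻¹.map (algebraMap ℝ ℂ) = 1 := by
    rw [hJC, ← Matrix.map_mul, Matrix.mul_nonsing_inv _ (isUnit_iff_ne_zero.2 hJ.det_pos.ne')]
    simp
  have e5 : μ • (JC *ᵥ w) = -((k₁ : ℂ) • (LC *ᵥ x)) - (c : ℂ) • (LC *ᵥ z) := by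
    have := congrArg (fun t => JC *ᵥ t) e2
    simpa only [mulVec_smul, mulVec_sub, mulVec_neg, mulVec_mulVec, ← Matrix.mul_assoc, hJJ,
      Matrix.one_mul] using this
  have hw' : w = (2 * μ) • x := funext e1
  have hz' : (μ + ((α * lam : ℝ) : ℂ)) • z = μ • x := funext e3
  have e6 := congrArg (fun t => star x ⬝ᵥ t) e5
  have e7 := congrArg (fun t => star x ⬝ᵥ (LC *ᵥ t)) hz'
  obtain ⟨p, hp, hpe⟩ := aux_quad J hJ x hx0
  obtain ⟨q, hq, hqe⟩ := aux_quad L hL x hx0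
  simp only [hw', mulVec_smul, dotProduct_smul, dotProduct_sub, dotProduct_neg, smul_eq_mul,
    ← hJC, ← hLC, hpe, hqe] at e6 e7 hpe hqe
  rw [hpe, hqe] at e6
  rw [hqe] at e7
  refine aux_cubic p q k₁ c (α * lam) hp hq hk₁ (by positivity) ha μ ?_
  linear_combination (μ + ((α * lam : ℝ) : ℂ)) * e6 - (c:ℂ) * e7
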